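/- arXiv:2505.10624 — 6 statements merged into one kernel-verified Lean document; each statement's English description precedes it below -/
import Mathlib

section
/- Under the binary-treatment binary-outcome model, the second moment of the efficient influence function of the log causal risk ratio satisfies E[(D*_Ψ)²] = E[ Q̄¹(W)(1−Q̄¹(W))/(ψ₁² g(W)) + Q̄⁰(W)(1−Q̄⁰(W))/(ψ₀² (1−g(W))) + (Q̄¹(W)/ψ₁ − Q̄⁰(W)/ψ₀)² ]. -/
open MeasureTheory

/-!
Since `Y² = Y`, `(Y - Q)² = (1 - 2Q)(Y - Q) + Q(1 - Q)`. Writing `H(A, W)` for the inverse-probability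
weight and `B(W) = Q¹/ψ₁ - Q⁰/ψ₀`, this turns `D²` into
`K(A, W) (Y - Q(A, W)) + H(A, W)² Q(A, W) (1 - Q(A, W)) + B(W)²` with `K = H² (1 - 2Q) + 2 H B`.
The middle term is affine in `A ∈ {0, 1}` given `W`, hence equals `L(W) (A - g(W))` plus the two
variance terms of the claim. So `D²` is the claimed integrand plus two residuals, weighted by
functions of the conditioning variables that are essentially bounded thanks to `δ ≤ g ≤ 1 - δ`;
such weighted residuals integrate to zero (`weighted_residual`).
-/

/-- A regression residual `X - E[X | Z]` is orthogonal to essentially bounded functions of `Z`. -/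
theorem weighted_residual {Ω 𝒵 : Type*} [MeasurableSpace Ω] [MeasurableSpace 𝒵]
    (P : Measure Ω) [IsProbabilityMeasure P] (Z : Ω → 𝒵) (hZ : Measurable Z)
    (X : Ω → ℝ) (hX : Integrable X P) (h k : 𝒵 → ℝ)
    (hcond : P[X | MeasurableSpace.comap Z inferInstance] =ᵐ[P] fun ω => h (Z ω))
    (hk : Measurable k) (hkb : MemLp (fun ω => k (Z ω)) ⊤ P) :
    Integrable (fun ω => k (Z ω) * (X ω - h (Z ω))) P ∧
      ∫ ω, k (Z ω) * (X ω - h (Z ω)) ∂P = 0 := by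
  have hm := hZ.comap_le
  have hh : Integrable (fun ω => h (Z ω)) P := integrable_condExp.congr hcond
  have hkX : Integrable (fun ω => k (Z ω) * X ω) P := hX.mul_of_top_right hkb
  have hkh : Integrable (fun ω => k (Z ω) * h (Z ω)) P := hh.mul_of_top_right hkb
  have hkm : StronglyMeasurable[MeasurableSpace.comap Z inferInstance] (fun ω => k (Z ω)) :=
    (hk.comp (comap_measurable Z)).stronglyMeasurable
  have hpull := condExp_mul_of_stronglyMeasurable_left hkm hkX hX
  have hint : ∫ ω, k (Z ω) * X ω ∂P = ∫ ω, k (Z ω) * h (Z ω) ∂P := by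
    rw [← integral_condExp hm]
    refine integral_congr_ae ?_
    filter_upwards [hpull, hcond] with ω h1 h2
    calc _ = _ := h1
      _ = _ := by simp only [Pi.mul_apply, h2]
  simp only [mul_sub]
  exact ⟨hkX.sub hkh, by rw [integral_sub hkX hkh, hint, sub_self]⟩

/-- second moment of the EIF of log(CRR). -/
theorem eif_logCRR_second_moment
    {Ω : Type*} [MeasurableSpace Ω] (P : Measure Ω) [IsProbabilityMeasure P]
    {𝒲 : Type*} [MeasurableSpace 𝒲]
    (W : Ω → 𝒲) (A Y : Ω → ℝ)
    (hW : Measurable W) (hA : Measurable A) (hY : Measurable Y)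
    (hA01 : ∀ ω, A ω = 0 ∨ A ω = 1) (hY01 : ∀ ω, Y ω = 0 ∨ Y ω = 1)
    (g : 𝒲 → ℝ) (Q : ℝ → 𝒲 → ℝ)
    (hgmeas : Measurable g) (hQmeas : Measurable (Function.uncurry Q))
    (hg01 : ∀ w, 0 < g w ∧ g w < 1)
    (hQ01 : ∀ a ∈ ({0, 1} : Set ℝ), ∀ w, 0 < Q a w ∧ Q a w < 1)
    (δ : ℝ) (hδ : 0 < δ)
    (hbound : ∀ᵐ ω ∂P, δ ≤ g (W ω) ∧ g (W ω) ≤ 1 - δ)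
    (hAg : P[A | MeasurableSpace.comap W inferInstance] =ᵐ[P] fun ω => g (W ω))
    (hYQ : P[Y | MeasurableSpace.comap (fun ω => (A ω, W ω)) inferInstance]
        =ᵐ[P] fun ω => Q (A ω) (W ω))
    (ψ₁ ψ₀ : ℝ)
    (hψ₁ : ψ₁ = ∫ ω, Q 1 (W ω) ∂P) (hψ₀ : ψ₀ = ∫ ω, Q 0 (W ω) ∂P)
    (hψ₁pos : 0 < ψ₁) (hψ₀pos : 0 < ψ₀)
    (D : Ω → ℝ)
    (hD : ∀ ω, D ω =
      ((if A ω = 1 then (1 : ℝ) else 0) / (ψ₁ * g (W ω))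
        - (if A ω = 0 then (1 : ℝ) else 0) / (ψ₀ * (1 - g (W ω))))
        * (Y ω - Q (A ω) (W ω))
      + Q 1 (W ω) / ψ₁ - Q 0 (W ω) / ψ₀)
    :
    ∫ ω, (D ω) ^ 2 ∂P =
      ∫ ω, (Q 1 (W ω) * (1 - Q 1 (W ω)) / (ψ₁ ^ 2 * g (W ω))
        + Q 0 (W ω) * (1 - Q 0 (W ω)) / (ψ₀ ^ 2 * (1 - g (W ω)))
        + (Q 1 (W ω) / ψ₁ - Q 0 (W ω) / ψ₀) ^ 2) ∂P := by
  have hAW : Measurable (fun ω => (A ω, W ω)) := hA.prodMk hW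
  have hAb : MemLp A ⊤ P := MemLp.of_bound hA.aestronglyMeasurable 1
    (ae_of_all _ fun ω => by rcases hA01 ω with h | h <;> simp [h])
  have hYb : MemLp Y ⊤ P := MemLp.of_bound hY.aestronglyMeasurable 1
    (ae_of_all _ fun ω => by rcases hY01 ω with h | h <;> simp [h])
  have hQm (a : ℝ) : Measurable (Q a) := hQmeas.comp measurable_prodMk_left
  have hQb (a : ℝ) (ha : a ∈ ({0, 1} : Set ℝ)) : MemLp (fun ω => Q a (W ω)) ⊤ P :=
    MemLp.of_bound ((hQm a).comp hW).aestronglyMeasurable 1 (ae_of_all _ fun ω => by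
      have := hQ01 a ha (W ω)
      rw [Real.norm_eq_abs, abs_of_pos this.1]; exact this.2.le)
  have hQ1b := hQb 1 (by simp)
  have hQ0b := hQb 0 (by simp)
  have hQAb : MemLp (fun ω => Q (A ω) (W ω)) ⊤ P :=
    MemLp.of_bound (hQmeas.comp hAW).aestronglyMeasurable 1 (ae_of_all _ fun ω => by
      have := hQ01 (A ω) (by simpa using hA01 ω) (W ω)
      rw [Real.norm_eq_abs, abs_of_pos this.1]; exact this.2.le)
  have hg1b : MemLp (fun ω => (g (W ω))⁻¹) ⊤ P :=
    MemLp.of_bound (hgmeas.comp hW).inv.aestronglyMeasurable δ⁻¹ (by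
      filter_upwards [hbound] with ω h
      rw [Real.norm_eq_abs, abs_of_pos (inv_pos.2 (hg01 _).1)]
      exact inv_anti₀ hδ h.1)
  have hg0b : MemLp (fun ω => (1 - g (W ω))⁻¹) ⊤ P :=
    MemLp.of_bound ((hgmeas.comp hW).const_sub 1).inv.aestronglyMeasurable δ⁻¹ (by
      filter_upwards [hbound] with ω h
      rw [Real.norm_eq_abs, abs_of_pos (inv_pos.2 (by linarith [(hg01 (W ω)).2]))]
      exact inv_anti₀ hδ (by linarith [h.2]))
  have mulb {f k : Ω → ℝ} (hf : MemLp f ⊤ P) (hk : MemLp k ⊤ P) :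
      MemLp (fun ω => f ω * k ω) ⊤ P := hk.mul hf
  have cb (c : ℝ) : MemLp (fun _ : Ω => c) ⊤ P := memLp_const c
  let B : 𝒲 → ℝ := fun w => Q 1 w * ψ₁⁻¹ - Q 0 w * ψ₀⁻¹
  let H : ℝ × 𝒲 → ℝ := fun p =>
    p.1 * (ψ₁⁻¹ * (g p.2)⁻¹) - (1 - p.1) * (ψ₀⁻¹ * (1 - g p.2)⁻¹)
  let K : ℝ × 𝒲 → ℝ := fun p =>
    H p * H p * (1 - 2 * Q p.1 p.2) + 2 * (H p * B p.2)
  -- The difference of the values of `H² Q (1 - Q)` at `A = 1` and at `A = 0`.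
  let L : 𝒲 → ℝ := fun w =>
    (ψ₁⁻¹ * (g w)⁻¹) * (ψ₁⁻¹ * (g w)⁻¹) * (Q 1 w * (1 - Q 1 w))
      - (ψ₀⁻¹ * (1 - g w)⁻¹) * (ψ₀⁻¹ * (1 - g w)⁻¹) * (Q 0 w * (1 - Q 0 w))
  have hQ1m := hQm 1
  have hQ0m := hQm 0
  have hQm' : Measurable (fun p : ℝ × 𝒲 => Q p.1 p.2) := hQmeas
  have hBm : Measurable B := by fun_prop
  have hHm : Measurable H := by fun_prop
  have hKm : Measurable K := by fun_prop
  have hLm : Measurable L := by fun_prop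
  have hu1 := mulb (cb ψ₁⁻¹) hg1b
  have hu0 := mulb (cb ψ₀⁻¹) hg0b
  have hBb : MemLp (fun ω => B (W ω)) ⊤ P := (mulb hQ1b (cb _)).sub (mulb hQ0b (cb _))
  have hHb : MemLp (fun ω => H (A ω, W ω)) ⊤ P :=
    (mulb hAb hu1).sub (mulb ((cb 1).sub hAb) hu0)
  have hKb : MemLp (fun ω => K (A ω, W ω)) ⊤ P :=
    (mulb (mulb hHb hHb) ((cb 1).sub (mulb (cb 2) hQAb))).add (mulb (cb 2) (mulb hHb hBb))
  have hLb : MemLp (fun ω => L (W ω)) ⊤ P :=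
    (mulb (mulb hu1 hu1) (mulb hQ1b ((cb 1).sub hQ1b))).sub
      (mulb (mulb hu0 hu0) (mulb hQ0b ((cb 1).sub hQ0b)))
  obtain ⟨hKi, hK0⟩ := weighted_residual P (fun ω => (A ω, W ω)) hAW Y
    (hYb.integrable le_top) (fun p => Q p.1 p.2) K hYQ hKm hKb
  obtain ⟨hLi, hL0⟩ := weighted_residual P W hW A (hAb.integrable le_top) g L hAg hLm hLb
  have hR : Integrable (fun ω => K (A ω, W ω) * (Y ω - Q (A ω) (W ω))
      + L (W ω) * (A ω - g (W ω))) P := hKi.add hLi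
  have key : ∀ ω, (D ω) ^ 2 = (K (A ω, W ω) * (Y ω - Q (A ω) (W ω))
      + L (W ω) * (A ω - g (W ω))) +
      (Q 1 (W ω) * (1 - Q 1 (W ω)) / (ψ₁ ^ 2 * g (W ω))
        + Q 0 (W ω) * (1 - Q 0 (W ω)) / (ψ₀ ^ 2 * (1 - g (W ω)))
        + (Q 1 (W ω) / ψ₁ - Q 0 (W ω) / ψ₀) ^ 2) := by
    intro ω
    have hg1 : g (W ω) ≠ 0 := (hg01 _).1.ne'
    have hg0 : 1 - g (W ω) ≠ 0 := (sub_pos.2 (hg01 (W ω)).2).ne'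
    have h1 := hψ₁pos.ne'
    have h0 := hψ₀pos.ne'
    rw [hD]
    simp only [K, L, H, B]
    rcases hA01 ω with ha | ha <;> rcases hY01 ω with hy | hy <;>
      simp only [ha, hy, if_true, zero_ne_one, one_ne_zero, if_false] <;> field_simp <;> ring
  have hRHS : Integrable (fun ω => Q 1 (W ω) * (1 - Q 1 (W ω)) / (ψ₁ ^ 2 * g (W ω))
        + Q 0 (W ω) * (1 - Q 0 (W ω)) / (ψ₀ ^ 2 * (1 - g (W ω)))
        + (Q 1 (W ω) / ψ₁ - Q 0 (W ω) / ψ₀) ^ 2) P := by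
    have := ((mulb (mulb hQ1b ((cb 1).sub hQ1b)) (mulb (cb (ψ₁⁻¹ ^ 2)) hg1b)).add
      (mulb (mulb hQ0b ((cb 1).sub hQ0b)) (mulb (cb (ψ₀⁻¹ ^ 2)) hg0b))).add (mulb hBb hBb)
    refine (this.integrable le_top).congr (ae_of_all _ fun ω => ?_)
    simp only [Pi.add_apply, Pi.sub_apply, B, div_eq_mul_inv, mul_inv, inv_pow]
    ring
  simp_rw [key]
  rw [integral_add hR hRHS, integral_add hKi hLi, hK0, hL0, add_zero, zero_add]
end

section
/- Under the binary-treatment binary-outcome model, the efficient influence function of the log causal risk ratio has mean zero: E[D*_Ψ] = 0. -/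
/-!
The weight `H = 1{A=1}/(ψ₁ g(W)) - 1{A=0}/(ψ₀ (1 - g(W)))` is a function of `(A, W)` and is
almost surely bounded because `δ ≤ g(W) ≤ 1 - δ`. Pulling it out of the conditional
expectation given `(A, W)` yields `E[H Y] = E[H Q(A, W)]` (`integral_weight_mul_residual`), so the
residual part of the influence function has mean zero. The remaining part
`Q(1, W)/ψ₁ - Q(0, W)/ψ₀` has mean `ψ₁/ψ₁ - ψ₀/ψ₀ = 0`.
-/

open MeasureTheory

/-- Orthogonality of the regression residual `Y - q`, where `q = E[Y | m]`, to every
`m`-measurable, essentially bounded weight `H`. Integrability of the product is part of the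
conclusion. -/
lemma integral_weight_mul_residual {Ω : Type*} {m m0 : MeasurableSpace Ω} (P : Measure Ω)
    [IsProbabilityMeasure P] (hm : m ≤ m0) {H Y q : Ω → ℝ} (hH : Measurable[m] H) {C : ℝ}
    (hC : ∀ᵐ ω ∂P, ‖H ω‖ ≤ C) (hY : Integrable Y P) (hq : P[Y | m] =ᵐ[P] q) :
    Integrable (fun ω => H ω * (Y ω - q ω)) P ∧ ∫ ω, H ω * (Y ω - q ω) ∂P = 0 := by
  have hHs : StronglyMeasurable[m] H := hH.stronglyMeasurable
  have hHa : AEStronglyMeasurable H P := (hHs.mono hm).aestronglyMeasurable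
  have hqi : Integrable q P := integrable_condExp.congr hq
  have hHY : Integrable (fun ω => H ω * Y ω) P := hY.bdd_mul hHa hC
  have hHq : Integrable (fun ω => H ω * q ω) P := hqi.bdd_mul hHa hC
  have key : ∫ ω, H ω * Y ω ∂P = ∫ ω, H ω * q ω ∂P := by
    rw [← integral_condExp hm]
    apply integral_congr_ae
    filter_upwards [condExp_mul_of_stronglyMeasurable_left hHs hHY hY, hq] with ω h1 h2
    rw [← h2]
    exact h1
  simp only [mul_sub]
  exact ⟨hHY.sub hHq, by rw [integral_sub hHY hHq, key, sub_self]⟩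

/-- the EIF of log(CRR) has mean zero. -/
theorem eif_logCRR_mean_zero
    {Ω : Type*} [MeasurableSpace Ω] (P : Measure Ω) [IsProbabilityMeasure P]
    {𝒲 : Type*} [MeasurableSpace 𝒲]
    (W : Ω → 𝒲) (A Y : Ω → ℝ)
    (hW : Measurable W) (hA : Measurable A) (hY : Measurable Y)
    (hA01 : ∀ ω, A ω = 0 ∨ A ω = 1) (hY01 : ∀ ω, Y ω = 0 ∨ Y ω = 1)
    (g : 𝒲 → ℝ) (Q : ℝ → 𝒲 → ℝ)
    (hgmeas : Measurable g) (hQmeas : Measurable (Function.uncurry Q))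
    (hg01 : ∀ w, 0 < g w ∧ g w < 1)
    (hQ01 : ∀ a ∈ ({0, 1} : Set ℝ), ∀ w, 0 < Q a w ∧ Q a w < 1)
    (δ : ℝ) (hδ : 0 < δ)
    (hbound : ∀ᵐ ω ∂P, δ ≤ g (W ω) ∧ g (W ω) ≤ 1 - δ)
    (hAg : P[A | MeasurableSpace.comap W inferInstance] =ᵐ[P] fun ω => g (W ω))
    (hYQ : P[Y | MeasurableSpace.comap (fun ω => (A ω, W ω)) inferInstance]
        =ᵐ[P] fun ω => Q (A ω) (W ω))
    (ψ₁ ψ₀ : ℝ)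
    (hψ₁ : ψ₁ = ∫ ω, Q 1 (W ω) ∂P) (hψ₀ : ψ₀ = ∫ ω, Q 0 (W ω) ∂P)
    (hψ₁pos : 0 < ψ₁) (hψ₀pos : 0 < ψ₀)
    (D : Ω → ℝ)
    (hD : ∀ ω, D ω =
      ((if A ω = 1 then (1 : ℝ) else 0) / (ψ₁ * g (W ω))
        - (if A ω = 0 then (1 : ℝ) else 0) / (ψ₀ * (1 - g (W ω))))
        * (Y ω - Q (A ω) (W ω))
      + Q 1 (W ω) / ψ₁ - Q 0 (W ω) / ψ₀)
    :
    ∫ ω, D ω ∂P = 0 := by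
  have hQint : ∀ a ∈ ({0, 1} : Set ℝ), Integrable (fun ω => Q a (W ω)) P := fun a ha =>
    Integrable.of_bound
      (hQmeas.comp (measurable_const.prodMk hW)).aestronglyMeasurable 1
      (.of_forall fun ω => by
        have := hQ01 a ha (W ω)
        simp only [Real.norm_eq_abs, abs_le]
        constructor <;> linarith)
  have hQ1 := hQint 1 (by simp)
  have hQ0 := hQint 0 (by simp)
  have hYint : Integrable Y P := Integrable.of_bound hY.aestronglyMeasurable 1
    (.of_forall fun ω => by rcases hY01 ω with h | h <;> simp [h])
  have hAW : Measurable (fun ω => (A ω, W ω)) := hA.prodMk hW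
  let h : ℝ × 𝒲 → ℝ := fun p =>
    (if p.1 = 1 then (1 : ℝ) else 0) / (ψ₁ * g p.2)
      - (if p.1 = 0 then (1 : ℝ) else 0) / (ψ₀ * (1 - g p.2))
  have hh : Measurable h := by
    have hind : ∀ c : ℝ, Measurable (fun p : ℝ × 𝒲 => if p.1 = c then (1 : ℝ) else 0) := fun c =>
      Measurable.ite (measurable_fst (measurableSet_singleton c)) measurable_const measurable_const
    exact ((hind 1).div ((hgmeas.comp measurable_snd).const_mul ψ₁)).sub
      ((hind 0).div (((hgmeas.comp measurable_snd).const_sub 1).const_mul ψ₀))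
  have hbd : ∀ᵐ ω ∂P, ‖h (A ω, W ω)‖ ≤ 1 / (ψ₁ * δ) + 1 / (ψ₀ * δ) := by
    filter_upwards [hbound] with ω hω
    have h1 : 1 / (ψ₁ * g (W ω)) ≤ 1 / (ψ₁ * δ) := by
      have := hω.1
      gcongr
    have h0 : 1 / (ψ₀ * (1 - g (W ω))) ≤ 1 / (ψ₀ * δ) := by
      have : δ ≤ 1 - g (W ω) := by linarith [hω.2]
      gcongr
    have p1 : 0 < 1 / (ψ₁ * g (W ω)) := by
      have := (hg01 (W ω)).1
      positivity
    have p0 : 0 < 1 / (ψ₀ * (1 - g (W ω))) := by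
      have : 0 < 1 - g (W ω) := by linarith [(hg01 (W ω)).2]
      positivity
    rcases hA01 ω with hA' | hA' <;>
      simp only [h, hA', Real.norm_eq_abs, abs_le, if_true, one_ne_zero, zero_ne_one, if_false,
        zero_div] <;>
      constructor <;> linarith
  obtain ⟨hRint, hR0⟩ := integral_weight_mul_residual P hAW.comap_le
    (hh.comp (comap_measurable fun ω => (A ω, W ω))) hbd hYint hYQ
  have hDeq : D = fun ω => h (A ω, W ω) * (Y ω - Q (A ω) (W ω))
      + (Q 1 (W ω) / ψ₁ - Q 0 (W ω) / ψ₀) := by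
    funext ω
    rw [hD ω, add_sub_assoc]
  simp only [Function.comp_apply] at hRint hR0
  have hPint : Integrable (fun ω => Q 1 (W ω) / ψ₁ - Q 0 (W ω) / ψ₀) P :=
    (hQ1.div_const _).sub (hQ0.div_const _)
  rw [hDeq, integral_add hRint hPint, hR0,
    integral_sub (hQ1.div_const _) (hQ0.div_const _), integral_div, integral_div, ← hψ₁, ← hψ₀,
    div_self hψ₁pos.ne', div_self hψ₀pos.ne']
  norm_num
end

section
/- Under the binary-treatment binary-outcome model, the efficient influence function of the variance parameter Σ² has mean zero: E[D*_{Σ²}] = 0, where D*_{Σ²} = D_{Q_W} + H_{Q̄}(A,W)·(Y − Q̄(A,W)) + H_g(W)·(A − g(W)) with the three components defined in the context (the decomposition of Theorem 1 and Corollary 1). -/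
/-!
The three components are centred separately. `D_{Q_W}` is a bounded variable minus its own mean
`Σ²`. The other two are products of a bounded function of a conditioning variable `Z`
(`Z = (A, W)` for `H_{Q̄}`, `Z = W` for `H_g`) with a residual `X - E[X | Z]`, so they integrate to
zero by the tower property and the pull-out property of conditional expectation
(`integral_mul_residual_eq_zero`).

The bound `δ ≤ g ≤ 1 - δ` enters only to make `1 / g` and `1 / (1 - g)` essentially bounded.
Essential boundedness is expressed as membership in `L^∞`, which is stable under sums and products,
so integrability of every term follows from that of its building blocks.
-/

open MeasureTheory

lemma MeasureTheory.MemLp.mul_top {Ω : Type*} [MeasurableSpace Ω] {P : Measure Ω} {f g : Ω → ℝ}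
    (hf : MemLp f ⊤ P) (hg : MemLp g ⊤ P) : MemLp (fun ω => f ω * g ω) ⊤ P :=
  hg.mul hf

/-- A residual `X - E[X | Z]` is orthogonal to every essentially bounded function of `Z`; the
product is moreover integrable, which is needed to split the integral of a sum. -/
lemma integral_mul_residual_eq_zero {Ω 𝒵 : Type*} [MeasurableSpace Ω] [MeasurableSpace 𝒵]
    {P : Measure Ω} [IsProbabilityMeasure P] {Z : Ω → 𝒵} (hZ : Measurable Z)
    {h : 𝒵 → ℝ} (hh : Measurable h) (hb : MemLp (fun ω => h (Z ω)) ⊤ P)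
    {X E : Ω → ℝ} (hX : Integrable X P)
    (hE : P[X | MeasurableSpace.comap Z inferInstance] =ᵐ[P] E) :
    Integrable (fun ω => h (Z ω) * (X ω - E ω)) P ∧
      ∫ ω, h (Z ω) * (X ω - E ω) ∂P = 0 := by
  have hEi : Integrable E P := integrable_condExp.congr hE
  have i1 : Integrable (fun ω => h (Z ω) * X ω) P := hX.mul_of_top_right hb
  have i2 : Integrable (fun ω => h (Z ω) * E ω) P := hEi.mul_of_top_right hb
  have hsm : StronglyMeasurable[MeasurableSpace.comap Z inferInstance] (fun ω => h (Z ω)) :=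
    (hh.comp (comap_measurable Z)).stronglyMeasurable
  have hpull := condExp_mul_of_stronglyMeasurable_left (μ := P) hsm i1 hX
  have heq : ∫ ω, h (Z ω) * X ω ∂P = ∫ ω, h (Z ω) * E ω ∂P := by
    rw [← integral_condExp hZ.comap_le]
    refine integral_congr_ae ?_
    filter_upwards [hpull, hE] with ω h1 h2
    exact h1.trans (by simp [h2])
  simp only [mul_sub]
  exact ⟨i1.sub i2, by rw [integral_sub i1 i2, heq, sub_self]⟩

/-- The reciprocal of a measurable function bounded below by `δ > 0` is in `L^∞`. -/
lemma memLp_top_inv {Ω : Type*} [MeasurableSpace Ω] {P : Measure Ω}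
    {f : Ω → ℝ} (hf : Measurable f) {δ : ℝ} (hδ : 0 < δ) (hb : ∀ᵐ ω ∂P, δ ≤ f ω) :
    MemLp (fun ω => (f ω)⁻¹) ⊤ P := by
  refine memLp_top_of_bound hf.inv.aestronglyMeasurable δ⁻¹ ?_
  filter_upwards [hb] with ω hω
  rw [Real.norm_eq_abs, abs_of_nonneg (inv_nonneg.2 (hδ.le.trans hω))]
  exact inv_anti₀ hδ hω

/-- the efficient influence function of the variance parameter `Σ²` has
mean zero, where `D*_{Σ²} = D_{Q_W} + H_{Q̄}(A,W)·(Y − Q̄(A,W)) + H_g(W)·(A − g(W))`. -/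
theorem eif_variance_parameter_mean_zero
    {Ω : Type*} [MeasurableSpace Ω] (P : Measure Ω) [IsProbabilityMeasure P]
    {𝒲 : Type*} [MeasurableSpace 𝒲]
    (W : Ω → 𝒲) (A Y : Ω → ℝ)
    (hW : Measurable W) (hA : Measurable A) (hY : Measurable Y)
    (hA01 : ∀ ω, A ω = 0 ∨ A ω = 1) (hY01 : ∀ ω, Y ω = 0 ∨ Y ω = 1)
    (g : 𝒲 → ℝ) (Q : ℝ → 𝒲 → ℝ)
    (hgmeas : Measurable g) (hQmeas : Measurable (Function.uncurry Q))
    (hg01 : ∀ w, 0 < g w ∧ g w < 1)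
    (hQ01 : ∀ a ∈ ({0, 1} : Set ℝ), ∀ w, 0 < Q a w ∧ Q a w < 1)
    (δ : ℝ) (hδ : 0 < δ)
    (hbound : ∀ᵐ ω ∂P, δ ≤ g (W ω) ∧ g (W ω) ≤ 1 - δ)
    (hAg : P[A | MeasurableSpace.comap W inferInstance] =ᵐ[P] fun ω => g (W ω))
    (hYQ : P[Y | MeasurableSpace.comap (fun ω => (A ω, W ω)) inferInstance]
        =ᵐ[P] fun ω => Q (A ω) (W ω))
    (ψ₁ ψ₀ : ℝ)
    (hψ₁ : ψ₁ = ∫ ω, Q 1 (W ω) ∂P) (hψ₀ : ψ₀ = ∫ ω, Q 0 (W ω) ∂P)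
    (hψ₁pos : 0 < ψ₁) (hψ₀pos : 0 < ψ₀)
    (Sig2 : ℝ)
    (hSig2 : Sig2 = ∫ ω, (Q 1 (W ω) * (1 - Q 1 (W ω)) / (ψ₁ ^ 2 * g (W ω))
        + Q 0 (W ω) * (1 - Q 0 (W ω)) / (ψ₀ ^ 2 * (1 - g (W ω)))
        + (Q 1 (W ω) / ψ₁ - Q 0 (W ω) / ψ₀) ^ 2) ∂P)
    (DQW : Ω → ℝ)
    (hDQW : ∀ ω, DQW ω =
      Q 1 (W ω) * (1 - Q 1 (W ω)) / (ψ₁ ^ 2 * g (W ω))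
        + Q 0 (W ω) * (1 - Q 0 (W ω)) / (ψ₀ ^ 2 * (1 - g (W ω)))
        + (Q 1 (W ω) / ψ₁ - Q 0 (W ω) / ψ₀) ^ 2 - Sig2)
    (H₁ H₀ Hg : Ω → ℝ)
    (hH₁ : ∀ ω, H₁ ω = (1 / ψ₁ ^ 2) * ((if A ω = 1 then (1 : ℝ) else 0) / g (W ω))
      * ((1 - 2 * Q 1 (W ω)) / g (W ω) + 2 * Q 1 (W ω) - 2 * ψ₁ * Q 0 (W ω) / ψ₀
        - (2 / ψ₁) * ((∫ ω', Q 1 (W ω') * (1 - Q 1 (W ω')) / g (W ω') ∂P)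
            + ∫ ω', (Q 1 (W ω')) ^ 2 ∂P)
        + 2 * (∫ ω', Q 1 (W ω') * Q 0 (W ω') ∂P) / ψ₀))
    (hH₀ : ∀ ω, H₀ ω = (1 / ψ₀ ^ 2) * ((if A ω = 0 then (1 : ℝ) else 0) / (1 - g (W ω)))
      * ((1 - 2 * Q 0 (W ω)) / (1 - g (W ω)) + 2 * Q 0 (W ω) - 2 * ψ₀ * Q 1 (W ω) / ψ₁
        - (2 / ψ₀) * ((∫ ω', Q 0 (W ω') * (1 - Q 0 (W ω')) / (1 - g (W ω')) ∂P)
            + ∫ ω', (Q 0 (W ω')) ^ 2 ∂P)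
        + 2 * (∫ ω', Q 1 (W ω') * Q 0 (W ω') ∂P) / ψ₁))
    (hHg : ∀ ω, Hg ω = Q 0 (W ω) * (1 - Q 0 (W ω)) / (ψ₀ ^ 2 * (1 - g (W ω)) ^ 2)
        - Q 1 (W ω) * (1 - Q 1 (W ω)) / (ψ₁ ^ 2 * (g (W ω)) ^ 2)) :
    ∫ ω, (DQW ω + (H₁ ω + H₀ ω) * (Y ω - Q (A ω) (W ω))
        + Hg ω * (A ω - g (W ω))) ∂P = 0 := by
  have mq : ∀ a, Measurable (Q a) := fun a => hQmeas.comp measurable_prodMk_left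
  have mq1 := mq 1
  have mq0 := mq 0
  have iA : Integrable A P := by
    refine Integrable.of_bound hA.aestronglyMeasurable 1 (ae_of_all _ fun ω => ?_)
    rcases hA01 ω with h | h <;> simp [h]
  have iY : Integrable Y P := by
    refine Integrable.of_bound hY.aestronglyMeasurable 1 (ae_of_all _ fun ω => ?_)
    rcases hY01 ω with h | h <;> simp [h]
  have bq : ∀ a ∈ ({0, 1} : Set ℝ), MemLp (fun ω => Q a (W ω)) ⊤ P := fun a ha =>
    memLp_top_of_bound ((mq a).comp hW).aestronglyMeasurable 1 (ae_of_all _ fun ω => by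
      rw [Real.norm_eq_abs, abs_le]
      constructor <;> linarith [(hQ01 a ha (W ω)).1, (hQ01 a ha (W ω)).2])
  have b1 := bq 1 (by simp)
  have b0 := bq 0 (by simp)
  have bg : MemLp (fun ω => (g (W ω))⁻¹) ⊤ P :=
    memLp_top_inv (hgmeas.comp hW) hδ (hbound.mono fun ω h => h.1)
  have bg' : MemLp (fun ω => (1 - g (W ω))⁻¹) ⊤ P :=
    memLp_top_inv (measurable_const.sub (hgmeas.comp hW)) hδ
      (hbound.mono fun ω h => by linarith [h.2])
  have bc : ∀ c : ℝ, MemLp (fun _ : Ω => c) ⊤ P := fun c => memLp_const c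
  have bI : ∀ a : ℝ, MemLp (fun ω => if A ω = a then (1 : ℝ) else 0) ⊤ P := fun a =>
    memLp_top_of_bound (Measurable.ite (hA (measurableSet_singleton a)) measurable_const
      measurable_const).aestronglyMeasurable 1 (ae_of_all _ fun ω => by split_ifs <;> simp)
  have v1 := b1.mul_top ((bc 1).sub b1)
  have v0 := b0.mul_top ((bc 1).sub b0)
  -- `D_{Q_W}` is bounded and centred.
  have bd : MemLp (fun ω => Q 1 (W ω) * (1 - Q 1 (W ω)) / (ψ₁ ^ 2 * g (W ω))
        + Q 0 (W ω) * (1 - Q 0 (W ω)) / (ψ₀ ^ 2 * (1 - g (W ω)))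
        + (Q 1 (W ω) / ψ₁ - Q 0 (W ω) / ψ₀) ^ 2) ⊤ P := by
    have s := (b1.mul_top (bc ψ₁⁻¹)).sub (b0.mul_top (bc ψ₀⁻¹))
    have t := ((v1.mul_top ((bc (ψ₁ ^ 2)⁻¹).mul_top bg)).add
      (v0.mul_top ((bc (ψ₀ ^ 2)⁻¹).mul_top bg'))).add (s.mul_top s)
    convert t using 1
    funext ω
    simp only [Pi.add_apply, Pi.sub_apply, div_eq_mul_inv, mul_inv, sq]
  have id := bd.integrable le_top
  have iD : Integrable DQW P :=
    (id.sub (integrable_const Sig2)).congr (ae_of_all _ fun ω => (hDQW ω).symm)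
  have hD : ∫ ω, DQW ω ∂P = 0 := by
    simp only [hDQW]
    rw [integral_sub id (integrable_const _), ← hSig2]
    simp
  -- The integrals inside `H₁` and `H₀` are constants; their values play no role.
  generalize (∫ ω', Q 1 (W ω') * (1 - Q 1 (W ω')) / g (W ω') ∂P)
            + ∫ ω', (Q 1 (W ω')) ^ 2 ∂P = c₁ at hH₁
  generalize (∫ ω', Q 0 (W ω') * (1 - Q 0 (W ω')) / (1 - g (W ω')) ∂P)
            + ∫ ω', (Q 0 (W ω')) ^ 2 ∂P = c₀ at hH₀
  generalize (∫ ω', Q 1 (W ω') * Q 0 (W ω') ∂P) = c at hH₁ hH₀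
  have bH₁ : MemLp H₁ ⊤ P := by
    have t := ((bc (1 / ψ₁ ^ 2)).mul_top ((bI 1).mul_top bg)).mul_top
      (((((((bc 1).sub ((bc 2).mul_top b1)).mul_top bg).add ((bc 2).mul_top b1)).sub
        (((bc (2 * ψ₁)).mul_top b0).mul_top (bc ψ₀⁻¹))).sub (bc (2 / ψ₁ * c₁))).add
        (bc (2 * c / ψ₀)))
    convert t using 1
    funext ω
    rw [hH₁]
    simp only [Pi.add_apply, Pi.sub_apply, div_eq_mul_inv]
  have bH₀ : MemLp H₀ ⊤ P := by
    have t := ((bc (1 / ψ₀ ^ 2)).mul_top ((bI 0).mul_top bg')).mul_top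
      (((((((bc 1).sub ((bc 2).mul_top b0)).mul_top bg').add ((bc 2).mul_top b0)).sub
        (((bc (2 * ψ₀)).mul_top b1).mul_top (bc ψ₁⁻¹))).sub (bc (2 / ψ₀ * c₀))).add
        (bc (2 * c / ψ₁)))
    convert t using 1
    funext ω
    rw [hH₀]
    simp only [Pi.add_apply, Pi.sub_apply, div_eq_mul_inv]
  have bHg : MemLp Hg ⊤ P := by
    have t := (v0.mul_top ((bc (ψ₀ ^ 2)⁻¹).mul_top (bg'.mul_top bg'))).sub
      (v1.mul_top ((bc (ψ₁ ^ 2)⁻¹).mul_top (bg.mul_top bg)))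
    convert t using 1
    funext ω
    rw [hHg]
    simp only [Pi.sub_apply, div_eq_mul_inv, mul_inv, sq]
  -- `H_{Q̄}` is a measurable function of `(A, W)`, and `H_g` of `W`.
  obtain ⟨h, hh, hhe⟩ : ∃ h : ℝ × 𝒲 → ℝ, Measurable h ∧
      (fun ω => H₁ ω + H₀ ω) = fun ω => h (A ω, W ω) := by
    refine ⟨fun z => (1 / ψ₁ ^ 2) * ((if z.1 = 1 then (1 : ℝ) else 0) / g z.2)
      * ((1 - 2 * Q 1 z.2) / g z.2 + 2 * Q 1 z.2 - 2 * ψ₁ * Q 0 z.2 / ψ₀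
        - (2 / ψ₁) * c₁ + 2 * c / ψ₀)
      + (1 / ψ₀ ^ 2) * ((if z.1 = 0 then (1 : ℝ) else 0) / (1 - g z.2))
      * ((1 - 2 * Q 0 z.2) / (1 - g z.2) + 2 * Q 0 z.2 - 2 * ψ₀ * Q 1 z.2 / ψ₁
        - (2 / ψ₀) * c₀ + 2 * c / ψ₁), ?_, funext fun ω => by rw [hH₁, hH₀]⟩
    have mI : ∀ a : ℝ, Measurable fun z : ℝ × 𝒲 => if z.1 = a then (1 : ℝ) else 0 := fun a =>
      Measurable.ite (measurable_fst (measurableSet_singleton a)) measurable_const measurable_const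
    have mI1 := mI 1
    have mI0 := mI 0
    fun_prop
  obtain ⟨k, hk, hke⟩ : ∃ k : 𝒲 → ℝ, Measurable k ∧ Hg = fun ω => k (W ω) := by
    refine ⟨fun w => Q 0 w * (1 - Q 0 w) / (ψ₀ ^ 2 * (1 - g w) ^ 2)
        - Q 1 w * (1 - Q 1 w) / (ψ₁ ^ 2 * (g w) ^ 2), by fun_prop, funext hHg⟩
  have bH := bH₁.add bH₀
  rw [show H₁ + H₀ = fun ω => h (A ω, W ω) from hhe] at bH
  have r1 := integral_mul_residual_eq_zero (hA.prodMk hW) hh bH iY hYQ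
  rw [hke] at bHg
  have r2 := integral_mul_residual_eq_zero hW hk bHg iA hAg
  simp only [fun ω => congrFun hhe ω, hke]
  have i12 : Integrable (fun ω => DQW ω + h (A ω, W ω) * (Y ω - Q (A ω) (W ω))) P := iD.add r1.1
  rw [integral_add i12 r2.1, integral_add iD r1.1, hD, r1.2, r2.2]
  simp
end

section
/- Under the binary-treatment binary-outcome model, let q̄ : 𝒲 → (0,1) and h : 𝒲 → [δ′, 1−δ′] (δ′ > 0) be measurable estimates and m ∈ ℝ a constant. Then the exact second-order remainder of the variance of the treatment-specific-mean influence function satisfies: −E[ Q̄¹(1−Q̄¹)/g + (Q̄¹ − ψ₁)² ] + E[ q̄(1−q̄)/h + (q̄ − m)² ] + E[ (A/h(W))·( (1−2q̄(W))/h(W) + 2(q̄(W) − m) )·(Y − q̄(W)) ] − E[ (q̄(1−q̄)/h²)·(A − h(W)) ] = E[ ((g−h)/h)·( Q̄¹(h−g)/(hg) + (Q̄¹−q̄)/h + (Q̄¹)²(g−h)/(hg) + (q̄−Q̄¹)(q̄+Q̄¹)/h ) ] + E[ (q̄−Q̄¹)²/h ] + E[ ((g−h)/h)·( (1−2q̄)/h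 + 2(q̄ − m) )·(Q̄¹ − q̄) ] − E[ (q̄ − Q̄¹)² ] + (m − ψ₁)². -/
open MeasureTheory

/-!
By the tower property, `E[f(W) A] = E[f(W) g(W)]` and
`E[f(W) A Y] = E[f(W) A Q(A, W)] = E[f(W) A Q(1, W)] = E[f(W) g(W) Q(1, W)]` for bounded `f`
(`integral_mul_eq_of_condExp`), the middle step because `A Q(A, W) = A Q(1, W)` for binary `A`.
Both terms involving `A` and `Y` thus become expectations of functions of `W` alone.
Pointwise, the signed sum of the left integrands minus that of the right ones then equals the affine expression
`2 (ψ₁ - m) Q(1, W) + m ^ 2 - ψ₁ ^ 2`, whose expectation is `(m - ψ₁) ^ 2`. All integrands are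
essentially bounded because `g` and `h` are bounded away from zero, so integrals may be split.
-/

/-- Integrated form of the pull-out property of conditional expectation. -/
lemma integral_mul_eq_of_condExp {Ω : Type*} {m m0 : MeasurableSpace Ω} {P : Measure Ω}
    [IsProbabilityMeasure P] (hm : m ≤ m0) {f X Z : Ω → ℝ} (hf : Measurable[m] f)
    (hfX : Integrable (fun ω => f ω * X ω) P) (hX : Integrable X P) (hZ : P[X | m] =ᵐ[P] Z) :
    ∫ ω, f ω * X ω ∂P = ∫ ω, f ω * Z ω ∂P := by
  rw [← integral_condExp hm (f := fun ω => f ω * X ω)]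
  apply integral_congr_ae
  have h1 := condExp_mul_of_stronglyMeasurable_left (m := m) (μ := P) hf.stronglyMeasurable
    (g := X) hfX hX
  filter_upwards [h1, hZ] with ω h1 h2
  rw [← h2]
  exact h1

lemma memLp_top_mul {Ω : Type*} [MeasurableSpace Ω] {P : Measure Ω} {f k : Ω → ℝ}
    (hf : MemLp f ⊤ P) (hk : MemLp k ⊤ P) : MemLp (fun ω => f ω * k ω) ⊤ P :=
  MemLp.mul (p := ⊤) (q := ⊤) hk hf

lemma memLp_top_of_abs_le {Ω : Type*} [MeasurableSpace Ω] {P : Measure Ω} {f : Ω → ℝ}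
    (hf : Measurable f) (C : ℝ) (hC : ∀ᵐ ω ∂P, |f ω| ≤ C) : MemLp f ⊤ P :=
  memLp_top_of_bound hf.aestronglyMeasurable C hC

/-- exact second-order remainder of the variance of the
treatment-specific-mean influence function. -/
theorem exact_remainder_variance_treatment_specific_mean
    {Ω : Type*} [MeasurableSpace Ω] (P : Measure Ω) [IsProbabilityMeasure P]
    {𝒲 : Type*} [MeasurableSpace 𝒲]
    (W : Ω → 𝒲) (A Y : Ω → ℝ)
    (hW : Measurable W) (hA : Measurable A) (hY : Measurable Y)
    (hA01 : ∀ ω, A ω = 0 ∨ A ω = 1) (hY01 : ∀ ω, Y ω = 0 ∨ Y ω = 1)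
    (g : 𝒲 → ℝ) (Q : ℝ → 𝒲 → ℝ)
    (hgmeas : Measurable g) (hQmeas : Measurable (Function.uncurry Q))
    (hg01 : ∀ w, 0 < g w ∧ g w < 1)
    (hQ01 : ∀ a ∈ ({0, 1} : Set ℝ), ∀ w, 0 < Q a w ∧ Q a w < 1)
    (δ : ℝ) (hδ : 0 < δ)
    (hbound : ∀ᵐ ω ∂P, δ ≤ g (W ω) ∧ g (W ω) ≤ 1 - δ)
    (hAg : P[A | MeasurableSpace.comap W inferInstance] =ᵐ[P] fun ω => g (W ω))
    (hYQ : P[Y | MeasurableSpace.comap (fun ω => (A ω, W ω)) inferInstance]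
        =ᵐ[P] fun ω => Q (A ω) (W ω))
    (ψ₁ : ℝ) (hψ₁ : ψ₁ = ∫ ω, Q 1 (W ω) ∂P)
    (qbar h : 𝒲 → ℝ) (hqbarmeas : Measurable qbar) (hhmeas : Measurable h)
    (hqbar01 : ∀ x, 0 < qbar x ∧ qbar x < 1)
    (δ' : ℝ) (hδ' : 0 < δ') (hhrange : ∀ x, δ' ≤ h x ∧ h x ≤ 1 - δ')
    (m : ℝ) :
    -(∫ ω, (Q 1 (W ω) * (1 - Q 1 (W ω)) / g (W ω) + (Q 1 (W ω) - ψ₁) ^ 2) ∂P)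
      + (∫ ω, (qbar (W ω) * (1 - qbar (W ω)) / h (W ω) + (qbar (W ω) - m) ^ 2) ∂P)
      + (∫ ω, (A ω / h (W ω)) * ((1 - 2 * qbar (W ω)) / h (W ω)
          + 2 * (qbar (W ω) - m)) * (Y ω - qbar (W ω)) ∂P)
      - (∫ ω, (qbar (W ω) * (1 - qbar (W ω)) / (h (W ω)) ^ 2) * (A ω - h (W ω)) ∂P)
    = (∫ ω, ((g (W ω) - h (W ω)) / h (W ω))
          * (Q 1 (W ω) * (h (W ω) - g (W ω)) / (h (W ω) * g (W ω))
            + (Q 1 (W ω) - qbar (W ω)) / h (W ω)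
            + (Q 1 (W ω)) ^ 2 * (g (W ω) - h (W ω)) / (h (W ω) * g (W ω))
            + (qbar (W ω) - Q 1 (W ω)) * (qbar (W ω) + Q 1 (W ω)) / h (W ω)) ∂P)
      + (∫ ω, (qbar (W ω) - Q 1 (W ω)) ^ 2 / h (W ω) ∂P)
      + (∫ ω, ((g (W ω) - h (W ω)) / h (W ω)) * ((1 - 2 * qbar (W ω)) / h (W ω)
          + 2 * (qbar (W ω) - m)) * (Q 1 (W ω) - qbar (W ω)) ∂P)
      - (∫ ω, (qbar (W ω) - Q 1 (W ω)) ^ 2 ∂P)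
      + (m - ψ₁) ^ 2 := by
  have hQ1m : Measurable (Q 1) := hQmeas.comp (measurable_const.prodMk measurable_id)
  have hQ1 : ∀ w, 0 < Q 1 w ∧ Q 1 w < 1 := hQ01 1 (by simp)
  have hh0 : ∀ w, 0 < h w := fun w => hδ'.trans_le (hhrange w).1
  have hmle : MeasurableSpace.comap W inferInstance ≤ (inferInstance : MeasurableSpace Ω) :=
    hW.comap_le
  have hmle2 : MeasurableSpace.comap (fun ω => (A ω, W ω)) inferInstance
      ≤ (inferInstance : MeasurableSpace Ω) := (hA.prodMk hW).comap_le
  have bA : MemLp A ⊤ P := memLp_top_of_abs_le hA 1 <| .of_forall fun ω => by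
    rcases hA01 ω with h | h <;> simp [h]
  have bY : MemLp Y ⊤ P := memLp_top_of_abs_le hY 1 <| .of_forall fun ω => by
    rcases hY01 ω with h | h <;> simp [h]
  have bQ : MemLp (fun ω => Q 1 (W ω)) ⊤ P :=
    memLp_top_of_abs_le (hQ1m.comp hW) 1 <| .of_forall fun ω => by
      rw [abs_of_pos (hQ1 _).1]; exact (hQ1 _).2.le
  have bq : MemLp (fun ω => qbar (W ω)) ⊤ P :=
    memLp_top_of_abs_le (hqbarmeas.comp hW) 1 <| .of_forall fun ω => by
      rw [abs_of_pos (hqbar01 _).1]; exact (hqbar01 _).2.le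
  have bg : MemLp (fun ω => g (W ω)) ⊤ P :=
    memLp_top_of_abs_le (hgmeas.comp hW) 1 <| .of_forall fun ω => by
      rw [abs_of_pos (hg01 _).1]; exact (hg01 _).2.le
  have bh : MemLp (fun ω => h (W ω)) ⊤ P :=
    memLp_top_of_abs_le (hhmeas.comp hW) 1 <| .of_forall fun ω => by
      rw [abs_of_pos (hh0 _)]; linarith [(hhrange (W ω)).2]
  have bgi : MemLp (fun ω => (g (W ω))⁻¹) ⊤ P := by
    refine memLp_top_of_abs_le (hgmeas.comp hW).inv δ⁻¹ ?_
    filter_upwards [hbound] with ω hω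
    rw [abs_of_pos (inv_pos.2 (hg01 _).1)]
    exact inv_anti₀ hδ hω.1
  have bhi : MemLp (fun ω => (h (W ω))⁻¹) ⊤ P := by
    refine memLp_top_of_abs_le (hhmeas.comp hW).inv δ'⁻¹ <| .of_forall fun ω => ?_
    rw [abs_of_pos (inv_pos.2 (hh0 _))]
    exact inv_anti₀ hδ' (hhrange _).1
  have bc : ∀ c : ℝ, MemLp (fun _ : Ω => c) ⊤ P := fun c => memLp_const c
  have mul {f k : Ω → ℝ} (hf : MemLp f ⊤ P) (hk : MemLp k ⊤ P) :
    MemLp (fun ω => f ω * k ω) ⊤ P := memLp_top_mul hf hk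
  have add {f k : Ω → ℝ} (hf : MemLp f ⊤ P) (hk : MemLp k ⊤ P) :
    MemLp (fun ω => f ω + k ω) ⊤ P := hf.add hk
  have sub {f k : Ω → ℝ} (hf : MemLp f ⊤ P) (hk : MemLp k ⊤ P) :
    MemLp (fun ω => f ω - k ω) ⊤ P := hf.sub hk
  have neg {f : Ω → ℝ} (hf : MemLp f ⊤ P) : MemLp (fun ω => -f ω) ⊤ P := hf.neg
  have int {f : Ω → ℝ} (hf : MemLp f ⊤ P) : Integrable f P := hf.integrable le_top
  have towerA : ∀ f : 𝒲 → ℝ, Measurable f → MemLp (fun ω => f (W ω)) ⊤ P →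
      ∫ ω, f (W ω) * A ω ∂P = ∫ ω, f (W ω) * g (W ω) ∂P := fun f hf bf =>
    integral_mul_eq_of_condExp hmle (hf.comp (comap_measurable W)) (int (mul bf bA)) (int bA) hAg
  have towerY : ∀ f : 𝒲 → ℝ, Measurable f → MemLp (fun ω => f (W ω)) ⊤ P →
      ∫ ω, f (W ω) * A ω * Y ω ∂P = ∫ ω, f (W ω) * Q 1 (W ω) * g (W ω) ∂P := by
    intro f hf bf
    have hm2 := comap_measurable (m := Prod.instMeasurableSpace) (fun ω => (A ω, W ω))
    rw [integral_mul_eq_of_condExp hmle2 (f := fun ω => f (W ω) * A ω)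
      ((hf.comp (measurable_snd.comp hm2)).mul (measurable_fst.comp hm2))
      (int (mul (mul bf bA) bY)) (int bY) hYQ]
    rw [← towerA (fun w => f w * Q 1 w) (hf.mul hQ1m) (mul bf bQ)]
    refine integral_congr_ae (.of_forall fun ω => ?_)
    rcases hA01 ω with h | h <;> simp [h]
  -- `c` is the coefficient of `A * (Y - qbar)` in the outcome-regression term.
  let c : 𝒲 → ℝ := fun w => (h w)⁻¹ * ((1 - 2 * qbar w) * (h w)⁻¹ + 2 * (qbar w - m))
  have hc : Measurable c := by fun_prop
  have bcc : MemLp (fun ω => c (W ω)) ⊤ P :=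
    mul bhi (add (mul (sub (bc 1) (mul (bc 2) bq)) bhi) (mul (bc 2) (sub bq (bc m))))
  have e3 : (∫ ω, (A ω / h (W ω)) * ((1 - 2 * qbar (W ω)) / h (W ω)
          + 2 * (qbar (W ω) - m)) * (Y ω - qbar (W ω)) ∂P)
      = ∫ ω, c (W ω) * g (W ω) * (Q 1 (W ω) - qbar (W ω)) ∂P := by
    calc _ = ∫ ω, (c (W ω) * A ω * Y ω - c (W ω) * qbar (W ω) * A ω) ∂P := by
          refine integral_congr_ae (.of_forall fun ω => ?_)
          simp only [c, div_eq_mul_inv]; ring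
      _ = ∫ ω, (c (W ω) * Q 1 (W ω) * g (W ω) - c (W ω) * qbar (W ω) * g (W ω)) ∂P := by
          rw [integral_sub (int (mul (mul bcc bA) bY)) (int (mul (mul bcc bq) bA)),
            integral_sub (int (mul (mul bcc bQ) bg)) (int (mul (mul bcc bq) bg)),
            towerY c hc bcc, towerA (fun w => c w * qbar w) (hc.mul hqbarmeas) (mul bcc bq)]
      _ = _ := by
          refine integral_congr_ae (.of_forall fun ω => ?_)
          simp only; ring
  -- `d` is the coefficient of `A - h` in the propensity-score term.
  let d : 𝒲 → ℝ := fun w => qbar w * (1 - qbar w) * ((h w)⁻¹ * (h w)⁻¹)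
  have hd : Measurable d := by fun_prop
  have bd : MemLp (fun ω => d (W ω)) ⊤ P :=
    mul (mul bq (sub (bc 1) bq)) (mul bhi bhi)
  have e4 : (∫ ω, (qbar (W ω) * (1 - qbar (W ω)) / (h (W ω)) ^ 2) * (A ω - h (W ω)) ∂P)
      = ∫ ω, d (W ω) * (g (W ω) - h (W ω)) ∂P := by
    calc _ = ∫ ω, (d (W ω) * A ω - d (W ω) * h (W ω)) ∂P := by
          refine integral_congr_ae (.of_forall fun ω => ?_)
          simp only [d, div_eq_mul_inv]; ring
      _ = ∫ ω, (d (W ω) * g (W ω) - d (W ω) * h (W ω)) ∂P := by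
          rw [integral_sub (int (mul bd bA)) (int (mul bd bh)),
            integral_sub (int (mul bd bg)) (int (mul bd bh)), towerA d hd bd]
      _ = _ := by
          refine integral_congr_ae (.of_forall fun ω => ?_)
          simp only; ring
  rw [e3, e4]
  have i1 : MemLp (fun ω => Q 1 (W ω) * (1 - Q 1 (W ω)) / g (W ω) + (Q 1 (W ω) - ψ₁) ^ 2) ⊤ P := by
    simp only [div_eq_mul_inv, pow_two]
    exact add (mul (mul bQ (sub (bc 1) bQ)) bgi) (mul (sub bQ (bc _)) (sub bQ (bc _)))
  have i2 : MemLp (fun ω => qbar (W ω) * (1 - qbar (W ω)) / h (W ω)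
      + (qbar (W ω) - m) ^ 2) ⊤ P := by
    simp only [div_eq_mul_inv, pow_two]
    exact add (mul (mul bq (sub (bc 1) bq)) bhi) (mul (sub bq (bc _)) (sub bq (bc _)))
  have i3 : MemLp (fun ω => c (W ω) * g (W ω) * (Q 1 (W ω) - qbar (W ω))) ⊤ P :=
    mul (mul bcc bg) (sub bQ bq)
  have i4 : MemLp (fun ω => d (W ω) * (g (W ω) - h (W ω))) ⊤ P := mul bd (sub bg bh)
  have j1 : MemLp (fun ω => ((g (W ω) - h (W ω)) / h (W ω))
          * (Q 1 (W ω) * (h (W ω) - g (W ω)) / (h (W ω) * g (W ω))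
            + (Q 1 (W ω) - qbar (W ω)) / h (W ω)
            + (Q 1 (W ω)) ^ 2 * (g (W ω) - h (W ω)) / (h (W ω) * g (W ω))
            + (qbar (W ω) - Q 1 (W ω)) * (qbar (W ω) + Q 1 (W ω)) / h (W ω))) ⊤ P := by
    simp only [div_eq_mul_inv, pow_two, mul_inv]
    exact mul (mul (sub bg bh) bhi) (add (add (add (mul (mul bQ (sub bh bg)) (mul bhi bgi))
      (mul (sub bQ bq) bhi)) (mul (mul (mul bQ bQ) (sub bg bh)) (mul bhi bgi)))
      (mul (mul (sub bq bQ) (add bq bQ)) bhi))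
  have j2 : MemLp (fun ω => (qbar (W ω) - Q 1 (W ω)) ^ 2 / h (W ω)) ⊤ P := by
    simp only [div_eq_mul_inv, pow_two]
    exact mul (mul (sub bq bQ) (sub bq bQ)) bhi
  have j3 : MemLp (fun ω => ((g (W ω) - h (W ω)) / h (W ω)) * ((1 - 2 * qbar (W ω)) / h (W ω)
          + 2 * (qbar (W ω) - m)) * (Q 1 (W ω) - qbar (W ω))) ⊤ P := by
    simp only [div_eq_mul_inv]
    exact mul (mul (mul (sub bg bh) bhi) (add (mul (sub (bc 1) (mul (bc 2) bq)) bhi)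
      (mul (bc 2) (sub bq (bc m))))) (sub bQ bq)
  have j4 : MemLp (fun ω => (qbar (W ω) - Q 1 (W ω)) ^ 2) ⊤ P := by
    simp only [pow_two]
    exact mul (sub bq bQ) (sub bq bQ)
  have e5 : ∫ ω, (2 * (ψ₁ - m) * Q 1 (W ω) + (m ^ 2 - ψ₁ ^ 2)) ∂P = (m - ψ₁) ^ 2 := by
    rw [integral_add (int (mul (bc _) bQ)) (int (bc _)), integral_const_mul, ← hψ₁]
    simp only [integral_const, probReal_univ, smul_eq_mul]
    ring
  have i5 : MemLp (fun ω => 2 * (ψ₁ - m) * Q 1 (W ω) + (m ^ 2 - ψ₁ ^ 2)) ⊤ P :=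
    add (mul (bc _) bQ) (bc _)
  rw [← e5, ← integral_neg, ← integral_add (int (neg i1)) (int i2),
    ← integral_add (int (add (neg i1) i2)) (int i3),
    ← integral_sub (int (add (add (neg i1) i2) i3)) (int i4),
    ← integral_add (int j1) (int j2), ← integral_add (int (add j1 j2)) (int j3),
    ← integral_sub (int (add (add j1 j2) j3)) (int j4),
    ← integral_add (int (sub (add (add j1 j2) j3) j4)) (int i5)]
  refine integral_congr_ae (.of_forall fun ω => ?_)
  have hg0 := (hg01 (W ω)).1.ne'
  have hh0' := (hh0 (W ω)).ne'
  simp only [c, d]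
  field_simp
  ring
end

section
/- Under consistency, conditional exchangeability and positivity in the discrete-covariate setting, the counterfactual mean is identified by the g-formula: for each a ∈ {0,1}, E[Yᵃ] = Σ_w P(W = w) · E[Y | A = a, W = w], where the sum ranges over w with P(W = w) > 0. Consequently, if E[Y¹] > 0 and E[Y⁰] > 0, then log(E[Y¹]/E[Y⁰]) = log Σ_w P(W=w)E[Y | A=1, W=w] − log Σ_w P(W=w)E[Y | A=0, W=w]. -/
/-!
Within a stratum `{W = w}` of positive mass, put `Q = P[|W = w]`. By consistency `Y` agrees with
the potential outcome `Z` on `{A = a}`, so the conditional mean of `Y` given `A = a, W = w` is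
`Q(Z = 1, A = a) / Q(A = a)`, which exchangeability turns into `Q(Z = 1)`, the division being
legitimate by positivity (`integral_cond_stratum`). Multiplying by `P(W = w)` gives
`P(W = w, Z = 1)`, and the law of total probability over the countably many values of `W` sums
these to `P(Z = 1) = E[Z]` (`integral_eq_tsum_strata`).
-/

open MeasureTheory

open ProbabilityTheory

theorem integral_zero_one {Ω : Type*} [MeasurableSpace Ω] (μ : Measure Ω) (f : Ω → ℝ)
    (hf : Measurable f) (h01 : ∀ ω, f ω = 0 ∨ f ω = 1) :
    ∫ ω, f ω ∂μ = μ.real {ω | f ω = 1} := by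
  have hs : MeasurableSet {ω | f ω = 1} := hf (measurableSet_singleton 1)
  rw [← integral_indicator_one hs]
  congr 1
  ext ω
  rcases h01 ω with h | h <;> simp [Set.indicator, h]

/-- In a stratum, the mean of the observed outcome given treatment `a` is the conditional
probability that the potential outcome `Z` equals one. -/
theorem integral_cond_stratum {Ω : Type*} [MeasurableSpace Ω] (P : Measure Ω)
    [IsProbabilityMeasure P] {𝒲 : Type*} [MeasurableSpace 𝒲] [MeasurableSingletonClass 𝒲]
    (W : Ω → 𝒲) (A Y Z : Ω → ℝ) (hW : Measurable W) (hA : Measurable A) (hY : Measurable Y)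
    (hY01 : ∀ ω, Y ω = 0 ∨ Y ω = 1) (a : ℝ) (hYZ : ∀ ω, A ω = a → Y ω = Z ω) (w : 𝒲)
    (hexch : (P[|{ω | W ω = w}]) {ω | Z ω = 1 ∧ A ω = a}
      = (P[|{ω | W ω = w}]) {ω | Z ω = 1} * (P[|{ω | W ω = w}]) {ω | A ω = a})
    (hpos : (P[|{ω | W ω = w}]) {ω | A ω = a} ≠ 0) :
    ∫ ω, Y ω ∂(P[|{ω | A ω = a ∧ W ω = w}]) = (P[|{ω | W ω = w}]).real {ω | Z ω = 1} := by
  have hmW : MeasurableSet {ω | W ω = w} := hW (measurableSet_singleton w)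
  have hmA : MeasurableSet {ω | A ω = a} := hA (measurableSet_singleton a)
  have hset : {ω | A ω = a ∧ W ω = w} = {ω | W ω = w} ∩ {ω | A ω = a} := by
    ext ω; exact and_comm
  have hset' : {ω | A ω = a} ∩ {ω | Y ω = 1} = {ω | Z ω = 1 ∧ A ω = a} := by
    ext ω
    constructor
    · rintro ⟨h, h'⟩
      exact ⟨(hYZ ω h).symm.trans h', h⟩
    · rintro ⟨h', h⟩
      exact ⟨h, (hYZ ω h).trans h'⟩
  rw [integral_zero_one _ Y hY hY01, hset, ← cond_cond_eq_cond_inter hmW hmA, measureReal_def,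
    measureReal_def, cond_apply hmA, hset', hexch, mul_comm, mul_assoc,
    ENNReal.mul_inv_cancel hpos (measure_ne_top _ _), mul_one]

/-- The g-formula for a single potential outcome `Z` and treatment level `a`. -/
theorem integral_eq_tsum_strata {Ω : Type*} [MeasurableSpace Ω] (P : Measure Ω)
    [IsProbabilityMeasure P] {𝒲 : Type*} [MeasurableSpace 𝒲] [Countable 𝒲]
    [MeasurableSingletonClass 𝒲]
    (W : Ω → 𝒲) (A Y Z : Ω → ℝ) (hW : Measurable W) (hA : Measurable A) (hY : Measurable Y)
    (hZ : Measurable Z) (hY01 : ∀ ω, Y ω = 0 ∨ Y ω = 1) (hZ01 : ∀ ω, Z ω = 0 ∨ Z ω = 1)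
    (a : ℝ) (hYZ : ∀ ω, A ω = a → Y ω = Z ω)
    (hexch : ∀ w : 𝒲, P {ω | W ω = w} ≠ 0 →
      (P[|{ω | W ω = w}]) {ω | Z ω = 1 ∧ A ω = a}
        = (P[|{ω | W ω = w}]) {ω | Z ω = 1} * (P[|{ω | W ω = w}]) {ω | A ω = a})
    (hpos : ∀ w : 𝒲, P {ω | W ω = w} ≠ 0 → (P[|{ω | W ω = w}]) {ω | A ω = a} ≠ 0) :
    ∫ ω, Z ω ∂P = ∑' w : {w : 𝒲 // P {ω | W ω = w} ≠ 0},
      (P {ω | W ω = w.1}).toReal * ∫ ω, Y ω ∂(P[|{ω | A ω = a ∧ W ω = w.1}]) := by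
  have hmW : ∀ w, MeasurableSet {ω | W ω = w} := fun w => hW (measurableSet_singleton w)
  have hmZ : MeasurableSet {ω | Z ω = 1} := hZ (measurableSet_singleton 1)
  have hterm : ∀ w : {w : 𝒲 // P {ω | W ω = w} ≠ 0},
      (P {ω | W ω = w.1}).toReal * ∫ ω, Y ω ∂(P[|{ω | A ω = a ∧ W ω = w.1}])
        = (P ({ω | W ω = w.1} ∩ {ω | Z ω = 1})).toReal := by
    rintro ⟨w, hw⟩
    rw [integral_cond_stratum P W A Y Z hW hA hY hY01 a hYZ w (hexch w hw) (hpos w hw),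
      measureReal_def, ← ENNReal.toReal_mul, mul_comm, cond_mul_eq_inter (hmW w)]
  -- Null strata contribute nothing, so the sum may be extended to all of `𝒲`.
  have hsupp : (Function.support fun w => (P ({ω | W ω = w} ∩ {ω | Z ω = 1})).toReal)
      ⊆ {w | P {ω | W ω = w} ≠ 0} := by
    intro w hw h0
    exact hw (by simp [measure_mono_null Set.inter_subset_left h0])
  have hunion : {ω | Z ω = 1} = ⋃ w, ({ω | W ω = w} ∩ {ω | Z ω = 1}) := by
    ext ω; simp
  have htotal : P {ω | Z ω = 1} = ∑' w, P ({ω | W ω = w} ∩ {ω | Z ω = 1}) := by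
    conv_lhs => rw [hunion]
    refine measure_iUnion ?_ fun w => (hmW w).inter hmZ
    intro w w' hww
    refine Set.disjoint_left.2 ?_
    rintro ω ⟨h, -⟩ ⟨h', -⟩
    exact hww (h.symm.trans h')
  rw [tsum_congr hterm, integral_zero_one P Z hZ hZ01, measureReal_def, htotal,
    ENNReal.tsum_toReal_eq fun w => measure_ne_top _ _]
  exact (tsum_subtype_eq_of_support_subset hsupp).symm

/-- identification of the counterfactual means by the g-formula under
consistency, conditional exchangeability and positivity with a countable covariate, and
the resulting identification of the log causal risk ratio. -/
theorem g_formula_identification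
    {Ω : Type*} [MeasurableSpace Ω] (P : Measure Ω) [IsProbabilityMeasure P]
    {𝒲 : Type*} [MeasurableSpace 𝒲] [Countable 𝒲] [MeasurableSingletonClass 𝒲]
    (W : Ω → 𝒲) (A Y Y₀ Y₁ : Ω → ℝ)
    (hW : Measurable W) (hA : Measurable A) (hY : Measurable Y)
    (hY₀ : Measurable Y₀) (hY₁ : Measurable Y₁)
    (hA01 : ∀ ω, A ω = 0 ∨ A ω = 1) (hY01 : ∀ ω, Y ω = 0 ∨ Y ω = 1)
    (hY₀01 : ∀ ω, Y₀ ω = 0 ∨ Y₀ ω = 1) (hY₁01 : ∀ ω, Y₁ ω = 0 ∨ Y₁ ω = 1)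
    (hcons : ∀ ω, Y ω = A ω * Y₁ ω + (1 - A ω) * Y₀ ω)
    (hexch : ∀ a ∈ ({0, 1} : Set ℝ), ∀ w : 𝒲, P {ω | W ω = w} ≠ 0 →
      (P[|{ω | W ω = w}]) {ω | (if a = 1 then Y₁ ω else Y₀ ω) = 1 ∧ A ω = a}
        = (P[|{ω | W ω = w}]) {ω | (if a = 1 then Y₁ ω else Y₀ ω) = 1}
          * (P[|{ω | W ω = w}]) {ω | A ω = a})
    (hpositivity : ∀ w : 𝒲, P {ω | W ω = w} ≠ 0 →
      0 < (P[|{ω | W ω = w}]) {ω | A ω = 1}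
        ∧ (P[|{ω | W ω = w}]) {ω | A ω = 1} < 1) :
    (∀ a ∈ ({0, 1} : Set ℝ),
      ∫ ω, (if a = 1 then Y₁ ω else Y₀ ω) ∂P
        = ∑' w : {w : 𝒲 // P {ω | W ω = w} ≠ 0},
            (P {ω | W ω = w.1}).toReal
              * ∫ ω, Y ω ∂(P[|{ω | A ω = a ∧ W ω = w.1}])) ∧
    (0 < ∫ ω, Y₁ ω ∂P → 0 < ∫ ω, Y₀ ω ∂P →
      Real.log ((∫ ω, Y₁ ω ∂P) / ∫ ω, Y₀ ω ∂P)
        = Real.log (∑' w : {w : 𝒲 // P {ω | W ω = w} ≠ 0},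
            (P {ω | W ω = w.1}).toReal
              * ∫ ω, Y ω ∂(P[|{ω | A ω = 1 ∧ W ω = w.1}]))
          - Real.log (∑' w : {w : 𝒲 // P {ω | W ω = w} ≠ 0},
            (P {ω | W ω = w.1}).toReal
              * ∫ ω, Y ω ∂(P[|{ω | A ω = 0 ∧ W ω = w.1}]))) := by
  have h1 := integral_eq_tsum_strata P W A Y Y₁ hW hA hY hY₁ hY01 hY₁01 1
    (fun ω h => by rw [hcons ω, h]; ring)
    (fun w hw => by simpa using hexch 1 (by simp) w hw)
    (fun w hw => (hpositivity w hw).1.ne')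
  have h0 := integral_eq_tsum_strata P W A Y Y₀ hW hA hY hY₀ hY01 hY₀01 0
    (fun ω h => by rw [hcons ω, h]; ring)
    (fun w hw => by simpa using hexch 0 (by simp) w hw)
    (fun w hw hzero => by
      -- If `A = 0` were null in the stratum, `A = 1` would have full conditional probability.
      have := cond_isProbabilityMeasure hw
      have hc : {ω | A ω = 0} = {ω | A ω = 1}ᶜ := by
        ext ω
        rcases hA01 ω with h | h <;> simp [h]
      have hm : MeasurableSet {ω | A ω = 1} := hA (measurableSet_singleton 1)
      rw [hc, prob_compl_eq_zero_iff hm] at hzero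
      exact (hpositivity w hw).2.ne hzero)
  refine ⟨?_, fun hp1 hp0 => ?_⟩
  · rintro a (rfl | rfl)
    · simpa using h0
    · simpa using h1
  · rw [Real.log_div hp1.ne' hp0.ne', ← h1, ← h0]
end

section
/- Under the binary-treatment binary-outcome model, with θ₁ := E[Q̄¹(1−Q̄¹)/g], θ₂ := E[Q̄⁰(1−Q̄⁰)/(1−g)], θ₃ := E[(Q̄¹)²], θ₄ := E[(Q̄⁰)²], θ₅ := E[Q̄¹Q̄⁰], the variance of the log-risk-ratio influence function satisfies E[(D*_Ψ)²] = θ₁/ψ₁² + θ₂/ψ₀² + θ₃/ψ₁² + θ₄/ψ₀² − 2θ₅/(ψ₁ψ₀). -/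
/-!
The outcome and the treatment are binary, so `Y ^ 2 = Y` and `A ^ 2 = A`. Hence `D ^ 2` is affine
in `Y` with coefficients depending on `(A, W)` only, and integrating out `Y` given `(A, W)` amounts
to replacing `Y` by `Q A W`: the cross term vanishes and what remains is
`A * Q₁ (1 - Q₁) / (ψ₁ g) ^ 2 + (1 - A) * Q₀ (1 - Q₀) / (ψ₀ (1 - g)) ^ 2 + (Q₁ / ψ₁ - Q₀ / ψ₀) ^ 2`.
This is affine in `A` with coefficients depending on `W` only, so integrating out `A` given `W`
replaces `A` by `g W`, and expanding the square gives the five components. Both replacements are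
`integral_affine_condExp`; since `g` stays away from `0` and `1`, every function involved is
essentially bounded, which settles integrability.
-/

open MeasureTheory

/-- If `X` is bounded and `E[X | Z] = h Z`, then `X` may be replaced by `h Z` under the expectation of an expression
affine in `X` with coefficients that are bounded functions of `Z`. -/
lemma integral_affine_condExp {Ω 𝒵 : Type*} [MeasurableSpace Ω] [MeasurableSpace 𝒵]
    {P : Measure Ω} [IsProbabilityMeasure P] {Z : Ω → 𝒵} (hZ : Measurable Z)
    {X : Ω → ℝ} (hX : MemLp X ⊤ P) {f k h : 𝒵 → ℝ} (hf : Measurable f)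
    (hfb : MemLp (fun ω => f (Z ω)) ⊤ P) (hkb : MemLp (fun ω => k (Z ω)) ⊤ P)
    (hXh : P[X | MeasurableSpace.comap Z inferInstance] =ᵐ[P] fun ω => h (Z ω)) :
    ∫ ω, (f (Z ω) * X ω + k (Z ω)) ∂P = ∫ ω, (f (Z ω) * h (Z ω) + k (Z ω)) ∂P := by
  have hle : MeasurableSpace.comap Z inferInstance ≤ (inferInstance : MeasurableSpace Ω) :=
    hZ.comap_le
  have hfX : Integrable (fun ω => f (Z ω) * X ω) P := (hX.mul (r := ⊤) hfb).integrable le_top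
  have hfm : StronglyMeasurable[MeasurableSpace.comap Z inferInstance] (fun ω => f (Z ω)) :=
    (hf.comp (comap_measurable Z)).stronglyMeasurable
  have hce : P[fun ω => f (Z ω) * X ω | MeasurableSpace.comap Z inferInstance]
      =ᵐ[P] fun ω => f (Z ω) * h (Z ω) := by
    refine (condExp_mul_of_stronglyMeasurable_left hfm hfX (hX.integrable le_top)).trans ?_
    filter_upwards [hXh] with ω hω
    simp [hω]
  have hfh : Integrable (fun ω => f (Z ω) * h (Z ω)) P := integrable_condExp.congr hce
  have hk : Integrable (fun ω => k (Z ω)) P := hkb.integrable le_top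
  rw [integral_add hfX hk, integral_add hfh hk, ← integral_condExp hle, integral_congr_ae hce]

lemma memLp_top_of_nonneg_of_le {Ω : Type*} [MeasurableSpace Ω] {P : Measure Ω} {f : Ω → ℝ}
    (hf : Measurable f) (C : ℝ) (h : ∀ᵐ ω ∂P, 0 ≤ f ω ∧ f ω ≤ C) : MemLp f ⊤ P := by
  refine memLp_top_of_bound hf.aestronglyMeasurable C ?_
  filter_upwards [h] with ω hω
  rw [Real.norm_eq_abs, abs_of_nonneg hω.1]
  exact hω.2

/-- the variance of the log-risk-ratio influence function in terms of the
five components `θ₁,…,θ₅`. -/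
theorem eif_logCRR_variance_theta_decomposition
    {Ω : Type*} [MeasurableSpace Ω] (P : Measure Ω) [IsProbabilityMeasure P]
    {𝒲 : Type*} [MeasurableSpace 𝒲]
    (W : Ω → 𝒲) (A Y : Ω → ℝ)
    (hW : Measurable W) (hA : Measurable A) (hY : Measurable Y)
    (hA01 : ∀ ω, A ω = 0 ∨ A ω = 1) (hY01 : ∀ ω, Y ω = 0 ∨ Y ω = 1)
    (g : 𝒲 → ℝ) (Q : ℝ → 𝒲 → ℝ)
    (hgmeas : Measurable g) (hQmeas : Measurable (Function.uncurry Q))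
    (hg01 : ∀ w, 0 < g w ∧ g w < 1)
    (hQ01 : ∀ a ∈ ({0, 1} : Set ℝ), ∀ w, 0 < Q a w ∧ Q a w < 1)
    (δ : ℝ) (hδ : 0 < δ)
    (hbound : ∀ᵐ ω ∂P, δ ≤ g (W ω) ∧ g (W ω) ≤ 1 - δ)
    (hAg : P[A | MeasurableSpace.comap W inferInstance] =ᵐ[P] fun ω => g (W ω))
    (hYQ : P[Y | MeasurableSpace.comap (fun ω => (A ω, W ω)) inferInstance]
        =ᵐ[P] fun ω => Q (A ω) (W ω))
    (ψ₁ ψ₀ : ℝ)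
    (hψ₁ : ψ₁ = ∫ ω, Q 1 (W ω) ∂P) (hψ₀ : ψ₀ = ∫ ω, Q 0 (W ω) ∂P)
    (hψ₁pos : 0 < ψ₁) (hψ₀pos : 0 < ψ₀)
    (D : Ω → ℝ)
    (hD : ∀ ω, D ω =
      ((if A ω = 1 then (1 : ℝ) else 0) / (ψ₁ * g (W ω))
        - (if A ω = 0 then (1 : ℝ) else 0) / (ψ₀ * (1 - g (W ω))))
        * (Y ω - Q (A ω) (W ω))
      + Q 1 (W ω) / ψ₁ - Q 0 (W ω) / ψ₀)
    (θ₁ θ₂ θ₃ θ₄ θ₅ : ℝ)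
    (hθ₁ : θ₁ = ∫ ω, Q 1 (W ω) * (1 - Q 1 (W ω)) / g (W ω) ∂P)
    (hθ₂ : θ₂ = ∫ ω, Q 0 (W ω) * (1 - Q 0 (W ω)) / (1 - g (W ω)) ∂P)
    (hθ₃ : θ₃ = ∫ ω, (Q 1 (W ω)) ^ 2 ∂P)
    (hθ₄ : θ₄ = ∫ ω, (Q 0 (W ω)) ^ 2 ∂P)
    (hθ₅ : θ₅ = ∫ ω, Q 1 (W ω) * Q 0 (W ω) ∂P) :
    ∫ ω, (D ω) ^ 2 ∂P =
      θ₁ / ψ₁ ^ 2 + θ₂ / ψ₀ ^ 2 + θ₃ / ψ₁ ^ 2 + θ₄ / ψ₀ ^ 2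
        - 2 * θ₅ / (ψ₁ * ψ₀) := by
  have hq1 : Measurable (Q 1) := hQmeas.comp (measurable_const.prodMk measurable_id)
  have hq0 : Measurable (Q 0) := hQmeas.comp (measurable_const.prodMk measurable_id)
  have b1 : ∀ w, 0 < Q 1 w ∧ Q 1 w < 1 := hQ01 1 (by simp)
  have b0 : ∀ w, 0 < Q 0 w ∧ Q 0 w < 1 := hQ01 0 (by simp)
  have mc : ∀ c : ℝ, MemLp (fun _ : Ω => c) ⊤ P := fun c => memLp_const c
  have mmul : ∀ {u v : Ω → ℝ}, MemLp u ⊤ P → MemLp v ⊤ P → MemLp (fun ω => u ω * v ω) ⊤ P :=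
    fun hu hv => hv.mul (r := ⊤) hu
  have madd : ∀ {u v : Ω → ℝ}, MemLp u ⊤ P → MemLp v ⊤ P → MemLp (fun ω => u ω + v ω) ⊤ P :=
    fun hu hv => hu.add hv
  have msub : ∀ {u v : Ω → ℝ}, MemLp u ⊤ P → MemLp v ⊤ P → MemLp (fun ω => u ω - v ω) ⊤ P :=
    fun hu hv => hu.sub hv
  have mA : MemLp A ⊤ P := memLp_top_of_nonneg_of_le hA 1 <| .of_forall fun ω => by
    rcases hA01 ω with h | h <;> simp [h]
  have mY : MemLp Y ⊤ P := memLp_top_of_nonneg_of_le hY 1 <| .of_forall fun ω => by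
    rcases hY01 ω with h | h <;> simp [h]
  have m1 : MemLp (fun ω => Q 1 (W ω)) ⊤ P :=
    memLp_top_of_nonneg_of_le (hq1.comp hW) 1 <| .of_forall fun ω =>
      ⟨(b1 _).1.le, (b1 _).2.le⟩
  have m0 : MemLp (fun ω => Q 0 (W ω)) ⊤ P :=
    memLp_top_of_nonneg_of_le (hq0.comp hW) 1 <| .of_forall fun ω =>
      ⟨(b0 _).1.le, (b0 _).2.le⟩
  have mQ : MemLp (fun ω => Q (A ω) (W ω)) ⊤ P :=
    memLp_top_of_nonneg_of_le (hQmeas.comp (hA.prodMk hW)) 1 <| .of_forall fun ω => by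
      rcases hA01 ω with h | h
      · simpa [h] using ⟨(b0 (W ω)).1.le, (b0 (W ω)).2.le⟩
      · simpa [h] using ⟨(b1 (W ω)).1.le, (b1 (W ω)).2.le⟩
  have mg : MemLp (fun ω => (g (W ω))⁻¹) ⊤ P := by
    refine memLp_top_of_nonneg_of_le (hgmeas.comp hW).inv δ⁻¹ ?_
    filter_upwards [hbound] with ω hω
    exact ⟨inv_nonneg.2 (hg01 _).1.le, inv_anti₀ hδ hω.1⟩
  have mg' : MemLp (fun ω => (1 - g (W ω))⁻¹) ⊤ P := by
    refine memLp_top_of_nonneg_of_le (measurable_const.sub (hgmeas.comp hW)).inv δ⁻¹ ?_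
    filter_upwards [hbound] with ω hω
    exact ⟨inv_nonneg.2 (by linarith [(hg01 (W ω)).2]), inv_anti₀ hδ (by linarith [hω.2])⟩
  -- `H` is the weight multiplying the residual and `B` the plug-in part, so `D = H (Y - Q) + B`.
  let H : ℝ × 𝒲 → ℝ := fun z =>
    z.1 * (ψ₁⁻¹ * (g z.2)⁻¹) - (1 - z.1) * (ψ₀⁻¹ * (1 - g z.2)⁻¹)
  let B : 𝒲 → ℝ := fun w => ψ₁⁻¹ * Q 1 w - ψ₀⁻¹ * Q 0 w
  have hBmeas : Measurable B := by fun_prop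
  have hHmeas : Measurable H := by fun_prop
  have mB : MemLp (fun ω => B (W ω)) ⊤ P := msub (mmul (mc _) m1) (mmul (mc _) m0)
  have mH : MemLp (fun ω => H (A ω, W ω)) ⊤ P :=
    msub (mmul mA (mmul (mc _) mg)) (mmul (msub (mc 1) mA) (mmul (mc _) mg'))
  let F : ℝ × 𝒲 → ℝ := fun z =>
    H z * H z * (1 - 2 * Function.uncurry Q z) + 2 * (H z * B z.2)
  let G : ℝ × 𝒲 → ℝ := fun z =>
    H z * H z * (Function.uncurry Q z * Function.uncurry Q z)
      - 2 * (H z * B z.2) * Function.uncurry Q z + B z.2 * B z.2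
  have hDFG : ∀ ω, D ω ^ 2 = F (A ω, W ω) * Y ω + G (A ω, W ω) := by
    intro ω
    have hDH : D ω = H (A ω, W ω) * (Y ω - Q (A ω) (W ω)) + B (W ω) := by
      rw [hD]
      rcases hA01 ω with h | h <;> simp [h, H, B] <;> ring
    have hY2 : Y ω ^ 2 = Y ω := by rcases hY01 ω with h | h <;> simp [h]
    rw [hDH]
    simp only [F, G, Function.uncurry]
    linear_combination H (A ω, W ω) ^ 2 * hY2
  have step1 := integral_affine_condExp (hA.prodMk hW) mY (f := F) (k := G)
    (h := Function.uncurry Q) (by fun_prop)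
    (madd (mmul (mmul mH mH) (msub (mc 1) (mmul (mc 2) mQ))) (mmul (mc 2) (mmul mH mB)))
    (madd (msub (mmul (mmul mH mH) (mmul mQ mQ)) (mmul (mmul (mc 2) (mmul mH mB)) mQ))
      (mmul mB mB)) hYQ
  -- `K₁` and `K₀` are the conditional variances in the two arms, times the squared weights.
  let K₁ : 𝒲 → ℝ := fun w =>
    Q 1 w * (1 - Q 1 w) * ((ψ₁⁻¹ * (g w)⁻¹) * (ψ₁⁻¹ * (g w)⁻¹))
  let K₀ : 𝒲 → ℝ := fun w =>
    Q 0 w * (1 - Q 0 w) * ((ψ₀⁻¹ * (1 - g w)⁻¹) * (ψ₀⁻¹ * (1 - g w)⁻¹))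
  have mK₁ : MemLp (fun ω => K₁ (W ω)) ⊤ P :=
    mmul (mmul m1 (msub (mc 1) m1)) (mmul (mmul (mc _) mg) (mmul (mc _) mg))
  have mK₀ : MemLp (fun ω => K₀ (W ω)) ⊤ P :=
    mmul (mmul m0 (msub (mc 1) m0)) (mmul (mmul (mc _) mg') (mmul (mc _) mg'))
  have step2 := integral_affine_condExp hW mA (f := fun w => K₁ w - K₀ w)
    (k := fun w => K₀ w + B w * B w) (h := g) (by fun_prop)
    (msub mK₁ mK₀) (madd mK₀ (mmul mB mB)) hAg
  have hmid : ∀ ω, F (A ω, W ω) * Function.uncurry Q (A ω, W ω) + G (A ω, W ω)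
      = (K₁ (W ω) - K₀ (W ω)) * A ω + (K₀ (W ω) + B (W ω) * B (W ω)) := by
    intro ω
    rcases hA01 ω with h | h <;> simp [h, F, G, H, K₁, K₀, Function.uncurry] <;> ring
  have hfin : ∀ ω, (K₁ (W ω) - K₀ (W ω)) * g (W ω) + (K₀ (W ω) + B (W ω) * B (W ω))
      = Q 1 (W ω) * (1 - Q 1 (W ω)) / g (W ω) / ψ₁ ^ 2
        + Q 0 (W ω) * (1 - Q 0 (W ω)) / (1 - g (W ω)) / ψ₀ ^ 2
        + Q 1 (W ω) ^ 2 / ψ₁ ^ 2 + Q 0 (W ω) ^ 2 / ψ₀ ^ 2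
        - 2 / (ψ₁ * ψ₀) * (Q 1 (W ω) * Q 0 (W ω)) := by
    intro ω
    have h1 : g (W ω) ≠ 0 := (hg01 _).1.ne'
    have h2 : 1 - g (W ω) ≠ 0 := (sub_pos.2 (hg01 _).2).ne'
    have e1 : g (W ω) * (g (W ω))⁻¹ = 1 := mul_inv_cancel₀ h1
    have e2 : (1 - g (W ω)) * (1 - g (W ω))⁻¹ = 1 := mul_inv_cancel₀ h2
    simp only [K₁, K₀, B, div_eq_mul_inv, mul_inv]
    linear_combination
      Q 1 (W ω) * (1 - Q 1 (W ω)) * ψ₁⁻¹ ^ 2 * (g (W ω))⁻¹ * e1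
      + Q 0 (W ω) * (1 - Q 0 (W ω)) * ψ₀⁻¹ ^ 2 * (1 - g (W ω))⁻¹ * e2
  have i1 : Integrable (fun ω => Q 1 (W ω) * (1 - Q 1 (W ω)) / g (W ω)) P :=
    (mmul (mmul m1 (msub (mc 1) m1)) mg).integrable le_top
  have i2 : Integrable (fun ω => Q 0 (W ω) * (1 - Q 0 (W ω)) / (1 - g (W ω))) P :=
    (mmul (mmul m0 (msub (mc 1) m0)) mg').integrable le_top
  have i3 : Integrable (fun ω => Q 1 (W ω) ^ 2) P := by
    simpa only [sq] using (mmul m1 m1).integrable le_top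
  have i4 : Integrable (fun ω => Q 0 (W ω) ^ 2) P := by
    simpa only [sq] using (mmul m0 m0).integrable le_top
  have i5 : Integrable (fun ω => Q 1 (W ω) * Q 0 (W ω)) P := (mmul m1 m0).integrable le_top
  have j1 := i1.div_const (ψ₁ ^ 2)
  have j2 := i2.div_const (ψ₀ ^ 2)
  have j3 := i3.div_const (ψ₁ ^ 2)
  have j4 := i4.div_const (ψ₀ ^ 2)
  simp_rw [hDFG]
  rw [step1]
  simp_rw [hmid]
  rw [step2]
  simp_rw [hfin]
  rw [integral_sub (((j1.fun_add j2).fun_add j3).fun_add j4) (i5.const_mul _),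
    integral_add ((j1.fun_add j2).fun_add j3) j4, integral_add (j1.fun_add j2) j3, integral_add j1 j2,
    integral_div, integral_div, integral_div, integral_div, integral_const_mul,
    ← hθ₁, ← hθ₂, ← hθ₃, ← hθ₄, ← hθ₅]
  ring
end
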